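/- arXiv:1310.5829 — 4 statements merged into one kernel-verified Lean document; each statement's English description precedes it below -/
import Mathlib

section
/- Let a_ℓ → +∞ be any sequence. Then lim_{ℓ→∞} limsup_{T→∞} sup_{x∈E} (1/T) log P_x( Q_T(1) > a_ℓ ) = −∞, where Q_T(1) is the total mass of the empirical flow, i.e., the total number of jumps in [0,T] divided by T. In particular the family {P_x ∘ (μ_T,Q_T)^{-1}}_{T>0} is exponentially tight uniformly in x ∈ E. -/
open MeasureTheory ProbabilityTheory Filter Topology Set ENNReal

noncomputable section

/-- The data of transition rates `c(x,dy) = r(x) p(x,y) λ(dy)` on a state space `E`,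
satisfying Assumption 1.1 (i)-(iii): `r` is continuous and nonnegative, `λ` is a probability
measure which is strictly positive on open sets, `p` is a strictly positive continuous
transition density, and `1/r` is `λ`-integrable. -/
structure ChainSetting (E : Type*) [MeasurableSpace E] [TopologicalSpace E] where
  r : E → ℝ
  r_cont : Continuous r
  r_nonneg : ∀ x, 0 ≤ r x
  lam : Measure E
  lam_prob : IsProbabilityMeasure lam
  lam_pos : ∀ U : Set E, IsOpen U → U.Nonempty → 0 < lam U
  p : E → E → ℝ
  p_cont : Continuous fun z : E × E => p z.1 z.2
  p_pos : ∀ x y, 0 < p x y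
  p_int : ∀ x, ∫ y, p x y ∂lam = 1
  inv_r_int : ∫⁻ x, (ENNReal.ofReal (r x))⁻¹ ∂lam ≠ ∞

namespace ChainSetting

variable {E : Type*} [MeasurableSpace E] [TopologicalSpace E] (S : ChainSetting E)

/-- The (closed) set `E₀ = {x : r(x) = 0}` of absorbing states. -/
def E0 : Set E := {x | S.r x = 0}

/-- The skeleton transition probability `p(x,dy) = p(x,y) λ(dy)`. -/
def skel (x : E) : Measure E := S.lam.withDensity fun y => ENNReal.ofReal (S.p x y)

/-- The jump rates `c(x,dy) = r(x) p(x,y) λ(dy)`. -/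
def cMeas (x : E) : Measure E := S.lam.withDensity fun y => ENNReal.ofReal (S.r x * S.p x y)

/-- The measure `μ(dx) c(x,dy)` on `E × E`. -/
def muc (μ : Measure E) : Measure (E × E) :=
  (μ.prod S.lam).withDensity fun z => ENNReal.ofReal (S.r z.1 * S.p z.1 z.2)

/-- The invariant probability `π(dx) = π₀(1/r)⁻¹ π₀(dx)/r(x)` of the continuous-time chain,
built from the invariant probability `π₀` of the skeleton, cf. (1.2). -/
def piMeas (π₀ : Measure E) : Measure E :=
  (∫⁻ x, (ENNReal.ofReal (S.r x))⁻¹ ∂π₀)⁻¹ •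
    π₀.withDensity fun x => (ENNReal.ofReal (S.r x))⁻¹

/-- Assumption 1.1 (iv): with `A_δ = {r < δ}`, there is a sequence `δ_n → 0` with
`λ(A_{2δ_n}) ≤ C λ(A_{2δ_n} \ A_{δ_n})`. -/
def CondIV : Prop :=
  ∃ δ : ℕ → ℝ, (∀ n, 0 < δ n) ∧ Tendsto δ atTop (𝓝 0) ∧
    ∃ C : ℝ≥0∞, C ≠ ∞ ∧ ∀ n,
      S.lam {x | S.r x < 2 * δ n} ≤ C * S.lam ({x | S.r x < 2 * δ n} \ {x | S.r x < δ n})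

end ChainSetting

/-- Trajectories of the jump process: the skeleton chain `ω.1` together with the holding
times `ω.2` (with value `∞` allowed, corresponding to absorption). -/
abbrev Traj (E : Type*) := (ℕ → E) × (ℕ → ℝ≥0∞)

namespace Traj

variable {E : Type*}

/-- The jump times `T_n = τ_0 + ⋯ + τ_{n-1}`. -/
def jumpTime (n : ℕ) (ω : Traj E) : ℝ≥0∞ := ∑ i ∈ Finset.range n, ω.2 i

/-- The position at time `t`: `X_t = Z_n` for `T_n ≤ t < T_{n+1}`. -/
def pos (t : ℝ) (ω : Traj E) : E := ω.1 (sInf {n | ENNReal.ofReal t < jumpTime (n + 1) ω})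

end Traj

/-- The exponential law of parameter `ρ`, as a measure on `ℝ≥0∞`; for `ρ ≤ 0` it is the Dirac
mass at `∞` (infinite holding time at an absorbing state). -/
def expMeasE (ρ : ℝ) : Measure ℝ≥0∞ :=
  if 0 < ρ then
    Measure.map ENNReal.ofReal
      (MeasureTheory.volume.withDensity fun s =>
        Set.indicator (Set.Ioi (0 : ℝ)) (fun s => ENNReal.ofReal (ρ * Real.exp (-(ρ * s)))) s)
  else Measure.dirac ∞

/-- `P` is the law of the continuous-time Markov chain with holding rates `ρ` and skeleton
transition kernel `κ`, started at `x`: the skeleton `ω.1` is a Markov chain with kernel `κ`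
started at `x`, and conditionally on the skeleton the holding times `ω.2 i` are independent
exponential random variables of parameters `ρ(Z_i)`. -/
structure IsChainLaw {E : Type*} [MeasurableSpace E]
    (ρ : E → ℝ) (κ : E → Measure E) (x : E) (P : Measure (Traj E)) : Prop where
  prob : IsProbabilityMeasure P
  init : P.map (fun ω => ω.1 0) = Measure.dirac x
  markov : ∀ (n : ℕ) (f : (Fin (n + 1) → E) → ℝ≥0∞) (g : E → ℝ≥0∞),
    Measurable f → Measurable g →
    ∫⁻ ω, f (fun i => ω.1 i) * g (ω.1 (n + 1)) ∂P
      = ∫⁻ ω, f (fun i => ω.1 i) * ∫⁻ y, g y ∂κ (ω.1 n) ∂P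
  holding : ∀ (n : ℕ) (f : (ℕ → E) → ℝ≥0∞) (g : Fin n → ℝ≥0∞ → ℝ≥0∞),
    Measurable f → (∀ i, Measurable (g i)) →
    ∫⁻ ω, f ω.1 * ∏ i : Fin n, g i (ω.2 i) ∂P
      = ∫⁻ ω, f ω.1 * ∏ i : Fin n, ∫⁻ s, g i s ∂expMeasE (ρ (ω.1 i)) ∂P

/-- The empirical measure `μ_T` of (2.2), as a measure on `E`. -/
def empMeas {E : Type*} [MeasurableSpace E] (T : ℝ) (ω : Traj E) : Measure E :=
  (ENNReal.ofReal T)⁻¹ •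
    Measure.map (fun t => Traj.pos t ω) (MeasureTheory.volume.restrict (Set.Ioc 0 T))

open Classical in
/-- The empirical flow `Q_T`, as a measure on `E × E`: `(1/T)` times the sum of the Dirac
masses at the jumps `(X_{t⁻}, X_t)` occurring at times `t ∈ [0,T]`. -/
def empFlow {E : Type*} [MeasurableSpace E] (T : ℝ) (ω : Traj E) : Measure (E × E) :=
  (ENNReal.ofReal T)⁻¹ • Measure.sum fun n : ℕ =>
    if Traj.jumpTime (n + 1) ω ≤ ENNReal.ofReal T ∧ ω.1 n ≠ ω.1 (n + 1)
    then Measure.dirac (ω.1 n, ω.1 (n + 1)) else 0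

open Classical in
/-- Bundle a measure as a probability measure (junk value if it is not one). -/
def toPM {α : Type*} [MeasurableSpace α] [Nonempty α] (μ : Measure α) : ProbabilityMeasure α :=
  if h : IsProbabilityMeasure μ then ⟨μ, h⟩
  else ⟨Measure.dirac (Classical.arbitrary α), by infer_instance⟩

open Classical in
/-- Bundle a measure as a finite measure (junk value if it is not one). -/
def toFM {α : Type*} [MeasurableSpace α] (μ : Measure α) : FiniteMeasure α :=
  if h : IsFiniteMeasure μ then ⟨μ, h⟩ else 0

/-- The pair empirical measure–empirical flow `(μ_T, Q_T)`, as a random element of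
`M₁(E) × M₊(E×E)`. -/
def empPair {E : Type*} [MeasurableSpace E] [Nonempty E] (T : ℝ) (ω : Traj E) :
    ProbabilityMeasure E × FiniteMeasure (E × E) :=
  (toPM (empMeas T ω), toFM (empFlow T ω))

variable {E : Type*} [MeasurableSpace E] [TopologicalSpace E] [PolishSpace E]
  [CompactSpace E] [BorelSpace E] [Nonempty E]

/-!
The jump rates are bounded by a constant `R`, so `n` successive holding times dominate `n`
independent exponential times of rate `R`. Markov's inequality for `exp (-θ T_n)` gives
`P_x(T_n ≤ t) ≤ exp (θ t) (R / (R + θ))ⁿ`, and `θ = R (e - 1)` makes the ratio `e⁻¹`. More than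
`a T` jumps before `T` force `T_⌈aT⌉ ≤ T`, an event of probability at most
`exp ((R (e - 1) - a) T)`, uniformly in `x`. Finally, a bound on the total mass cuts out a compact
set of flows, because `E` and hence `E × E` is compact.
-/

lemma ereal_exp_neg_mul_sum {ι : Type*} {θ : ℝ} (hθ : 0 ≤ θ) (s : Finset ι) (τ : ι → ℝ≥0∞) :
    EReal.exp (-(θ * (∑ i ∈ s, τ i : ℝ≥0∞))) = ∏ i ∈ s, EReal.exp (-(θ * τ i)) := by
  classical
  induction s using Finset.induction_on with
  | empty => simp
  | insert i s hi ih =>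
    have nonneg (x : ℝ≥0∞) : 0 ≤ (θ : EReal) * x :=
      mul_nonneg (EReal.coe_nonneg.2 hθ) (EReal.coe_ennreal_nonneg x)
    have ne_bot (x : ℝ≥0∞) : (θ : EReal) * x ≠ ⊥ := (EReal.bot_lt_zero.trans_le (nonneg x)).ne'
    rw [Finset.sum_insert hi, Finset.prod_insert hi, ← ih, ← EReal.exp_add,
      EReal.coe_ennreal_add, EReal.left_distrib_of_nonneg (EReal.coe_ennreal_nonneg _)
        (EReal.coe_ennreal_nonneg _), EReal.neg_add (.inl (ne_bot _)) (.inr (ne_bot _)),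
      sub_eq_add_neg]

lemma measurable_ereal_exp_neg_mul (θ : ℝ) :
    Measurable fun s : ℝ≥0∞ => EReal.exp (-((θ : EReal) * s)) :=
  (measurable_coe_ennreal_ereal.const_mul (θ : EReal)).neg.ereal_exp

lemma lintegral_exp_neg_mul_expMeasE {ρ θ : ℝ} (hρ : 0 < ρ) (hθ : -ρ < θ) :
    ∫⁻ s, EReal.exp (-(θ * s)) ∂expMeasE ρ = ENNReal.ofReal (ρ / (ρ + θ)) := by
  have integrand_eq {s : ℝ} (hs : s ∈ Ioi (0 : ℝ)) :
      ENNReal.ofReal (ρ * Real.exp (-(ρ * s))) * EReal.exp (-(θ * ENNReal.ofReal s)) =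
        ENNReal.ofReal (ρ * Real.exp (-(ρ + θ) * s)) := by
    rw [EReal.coe_ennreal_ofReal, max_eq_left (le_of_lt hs), ← EReal.coe_mul, ← EReal.coe_neg,
      EReal.exp_coe, ← ENNReal.ofReal_mul (by positivity), mul_assoc, ← Real.exp_add]
    ring_nf
  have measurable_exp : Measurable fun s : ℝ => EReal.exp (-(θ * ENNReal.ofReal s)) :=
    (measurable_ereal_exp_neg_mul θ).comp measurable_ofReal
  have neg_rate : -(ρ + θ) < 0 := by linarith
  rw [expMeasE, if_pos hρ, lintegral_map (measurable_ereal_exp_neg_mul θ) measurable_ofReal,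
    withDensity_indicator measurableSet_Ioi,
    lintegral_withDensity_eq_lintegral_mul _ (by fun_prop) measurable_exp]
  calc _ = ∫⁻ s in Ioi (0 : ℝ), ENNReal.ofReal (ρ * Real.exp (-(ρ + θ) * s)) :=
        setLIntegral_congr_fun measurableSet_Ioi fun _ => integrand_eq
    _ = ENNReal.ofReal (∫ s in Ioi (0 : ℝ), ρ * Real.exp (-(ρ + θ) * s)) :=
        (ofReal_integral_eq_lintegral_ofReal ((integrableOn_exp_mul_Ioi neg_rate 0).const_mul ρ)
          (.of_forall fun s => by positivity)).symm
    _ = ENNReal.ofReal (ρ / (ρ + θ)) := by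
        rw [integral_const_mul, integral_exp_mul_Ioi neg_rate, mul_zero, Real.exp_zero,
          neg_div_neg_eq, mul_one_div]

lemma lintegral_exp_neg_mul_expMeasE_le {ρ R θ : ℝ} (hρ : ρ ≤ R) (hθ : 0 < θ) :
    ∫⁻ s, EReal.exp (-(θ * s)) ∂expMeasE ρ ≤ ENNReal.ofReal (R / (R + θ)) := by
  by_cases h : 0 < ρ
  · rw [lintegral_exp_neg_mul_expMeasE h (by linarith)]
    apply ENNReal.ofReal_le_ofReal
    rw [div_le_div_iff₀ (by linarith) (by linarith)]
    nlinarith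
  · rw [expMeasE, if_neg h, lintegral_dirac' _ (measurable_ereal_exp_neg_mul θ),
      EReal.coe_ennreal_top, EReal.coe_mul_top_of_pos hθ, EReal.neg_top, EReal.exp_bot]
    exact zero_le

section JumpTimes

variable {X : Type*}

lemma Traj.jumpTime_mono (ω : Traj X) : Monotone fun n => Traj.jumpTime n ω :=
  fun _ _ hmn => Finset.sum_le_sum_of_subset (Finset.range_mono hmn)

variable [MeasurableSpace X]

lemma Traj.measurable_jumpTime (n : ℕ) : Measurable (Traj.jumpTime n : Traj X → ℝ≥0∞) :=
  Finset.measurable_sum _ fun i _ => (measurable_pi_apply i).comp measurable_snd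

namespace IsChainLaw

variable {ρ : X → ℝ} {κ : X → Measure X} {x : X} {P : Measure (Traj X)} {R : ℝ}

lemma lintegral_exp_neg_mul_jumpTime_le (hP : IsChainLaw ρ κ x P) (hρ : ∀ y, ρ y ≤ R)
    {θ : ℝ} (hθ : 0 < θ) (n : ℕ) :
    ∫⁻ ω, EReal.exp (-(θ * Traj.jumpTime n ω)) ∂P ≤ ENNReal.ofReal (R / (R + θ)) ^ n := by
  have := hP.prob
  calc ∫⁻ ω, EReal.exp (-(θ * Traj.jumpTime n ω)) ∂P
      = ∫⁻ ω, 1 * ∏ i : Fin n, EReal.exp (-(θ * ω.2 i)) ∂P := by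
        simp only [Traj.jumpTime, ereal_exp_neg_mul_sum hθ.le, one_mul, Finset.prod_range]
    _ = ∫⁻ ω, 1 * ∏ i : Fin n, ∫⁻ s, EReal.exp (-(θ * s)) ∂expMeasE (ρ (ω.1 i)) ∂P :=
        hP.holding n (fun _ => 1) (fun _ s => EReal.exp (-(θ * s))) measurable_const
          fun _ => measurable_ereal_exp_neg_mul θ
    _ ≤ ∫⁻ _, 1 * ∏ _i : Fin n, ENNReal.ofReal (R / (R + θ)) ∂P := by
        gcongr
        exact lintegral_exp_neg_mul_expMeasE_le (hρ _) hθ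
    _ = ENNReal.ofReal (R / (R + θ)) ^ n := by simp

lemma measure_jumpTime_le (hP : IsChainLaw ρ κ x P) (hρ : ∀ y, ρ y ≤ R)
    {θ t : ℝ} (hθ : 0 < θ) (ht : 0 ≤ t) (n : ℕ) :
    P {ω | Traj.jumpTime n ω ≤ ENNReal.ofReal t} ≤
      ENNReal.ofReal (Real.exp (θ * t)) * ENNReal.ofReal (R / (R + θ)) ^ n := by
  have exp_anti {ω : Traj X} (hω : Traj.jumpTime n ω ≤ ENNReal.ofReal t) :
      ENNReal.ofReal (Real.exp (-(θ * t))) ≤ EReal.exp (-(θ * Traj.jumpTime n ω)) := by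
    rw [← EReal.exp_coe, EReal.exp_le_exp_iff, EReal.coe_neg, EReal.neg_le_neg_iff,
      EReal.coe_mul]
    refine mul_le_mul_of_nonneg_left ?_ (EReal.coe_nonneg.2 hθ.le)
    rwa [← max_eq_left ht, ← EReal.coe_ennreal_ofReal, EReal.coe_ennreal_le_coe_ennreal_iff]
  calc P {ω | Traj.jumpTime n ω ≤ ENNReal.ofReal t}
      ≤ P {ω | ENNReal.ofReal (Real.exp (-(θ * t))) ≤
          EReal.exp (-(θ * Traj.jumpTime n ω))} := measure_mono fun _ => exp_anti
    _ ≤ (∫⁻ ω, EReal.exp (-(θ * Traj.jumpTime n ω)) ∂P) /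
          ENNReal.ofReal (Real.exp (-(θ * t))) :=
        meas_ge_le_lintegral_div
          ((measurable_ereal_exp_neg_mul θ).comp (Traj.measurable_jumpTime n)).aemeasurable
          (by simp [Real.exp_pos]) ENNReal.ofReal_ne_top
    _ ≤ ENNReal.ofReal (R / (R + θ)) ^ n / ENNReal.ofReal (Real.exp (-(θ * t))) := by
        gcongr
        exact hP.lintegral_exp_neg_mul_jumpTime_le hρ hθ n
    _ = ENNReal.ofReal (Real.exp (θ * t)) * ENNReal.ofReal (R / (R + θ)) ^ n := by
        rw [ENNReal.div_eq_inv_mul, ← ENNReal.ofReal_inv_of_pos (Real.exp_pos _), Real.exp_neg,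
          inv_inv]

lemma measure_jumpTime_le_exp (hP : IsChainLaw ρ κ x P) (hR : 0 < R) (hρ : ∀ y, ρ y ≤ R)
    {t : ℝ} (ht : 0 ≤ t) (n : ℕ) :
    P {ω | Traj.jumpTime n ω ≤ ENNReal.ofReal t} ≤
      ENNReal.ofReal (Real.exp (R * (Real.exp 1 - 1) * t - n)) := by
  have hθ : 0 < R * (Real.exp 1 - 1) := mul_pos hR (by simp)
  have ratio_eq : R / (R + R * (Real.exp 1 - 1)) = Real.exp (-1) := by
    rw [Real.exp_neg]
    field_simp
    ring
  refine (hP.measure_jumpTime_le hρ hθ ht n).trans_eq ?_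
  rw [ratio_eq, ← ENNReal.ofReal_pow (Real.exp_pos _).le, ← Real.exp_nat_mul,
    ← ENNReal.ofReal_mul (Real.exp_pos _).le, ← Real.exp_add, mul_neg_one,
    ← sub_eq_add_neg]

end IsChainLaw

end JumpTimes

section FlowMass

variable {X : Type*} [MeasurableSpace X]

lemma empFlow_univ_le_of_lt_jumpTime {T : ℝ} {ω : Traj X} {n : ℕ}
    (h : ENNReal.ofReal T < Traj.jumpTime (n + 1) ω) :
    empFlow T ω univ ≤ (ENNReal.ofReal T)⁻¹ * n := by
  have late_jump {k : ℕ} (hk : k ∉ Finset.range n) :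
      ¬(Traj.jumpTime (k + 1) ω ≤ ENNReal.ofReal T ∧ ω.1 k ≠ ω.1 (k + 1)) := fun hjump =>
    (h.trans_le (Traj.jumpTime_mono ω (by simpa using hk))).not_ge hjump.1
  rw [empFlow, Measure.smul_apply, smul_eq_mul, Measure.sum_apply _ .univ,
    tsum_eq_sum (s := Finset.range n) fun k hk => by rw [if_neg (late_jump hk)]; rfl]
  gcongr
  refine (Finset.sum_le_card_nsmul _ _ 1 fun k _ => ?_).trans_eq (by simp)
  split_ifs <;> simp

lemma jumpTime_ceil_le_of_lt_empFlow_univ {T a : ℝ} (hT : 0 < T) {ω : Traj X}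
    (h : ENNReal.ofReal a < empFlow T ω univ) :
    Traj.jumpTime ⌈a * T⌉₊ ω ≤ ENNReal.ofReal T := by
  rcases hN : ⌈a * T⌉₊ with _ | n
  · simp [Traj.jumpTime]
  · by_contra! hlate
    have n_lt : (n : ℝ) < a * T := Nat.lt_ceil.1 (hN ▸ n.lt_succ_self)
    refine h.not_ge ((empFlow_univ_le_of_lt_jumpTime hlate).trans ?_)
    rw [← ENNReal.ofReal_inv_of_pos hT, ← ENNReal.ofReal_natCast,
      ← ENNReal.ofReal_mul (by positivity)]
    exact ENNReal.ofReal_le_ofReal ((inv_mul_le_iff₀' hT).2 n_lt.le)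

lemma IsChainLaw.measure_lt_empFlow_univ_le {ρ : X → ℝ} {κ : X → Measure X} {x : X}
    {P : Measure (Traj X)} (hP : IsChainLaw ρ κ x P) {R : ℝ} (hR : 0 < R) (hρ : ∀ y, ρ y ≤ R)
    {T : ℝ} (hT : 0 < T) (a : ℝ) :
    P {ω | ENNReal.ofReal a < empFlow T ω univ} ≤
      ENNReal.ofReal (Real.exp ((R * (Real.exp 1 - 1) - a) * T)) :=
  calc P {ω | ENNReal.ofReal a < empFlow T ω univ}
      ≤ P {ω | Traj.jumpTime ⌈a * T⌉₊ ω ≤ ENNReal.ofReal T} :=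
        measure_mono fun _ => jumpTime_ceil_le_of_lt_empFlow_univ hT
    _ ≤ ENNReal.ofReal (Real.exp (R * (Real.exp 1 - 1) * T - ⌈a * T⌉₊)) :=
        hP.measure_jumpTime_le_exp hR hρ hT.le _
    _ ≤ ENNReal.ofReal (Real.exp ((R * (Real.exp 1 - 1) - a) * T)) := by
        gcongr
        linarith [Nat.le_ceil (a * T)]

lemma mass_toFM_le (μ : Measure X) : ((toFM μ).mass : ℝ≥0∞) ≤ μ univ := by
  by_cases h : IsFiniteMeasure μ
  · have coe_toFM : (toFM μ : Measure X) = μ := congrArg Subtype.val (dif_pos h)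
    rw [FiniteMeasure.ennreal_mass, coe_toFM]
  · have toFM_eq : toFM μ = 0 := dif_neg h
    rw [toFM_eq, FiniteMeasure.zero_mass, ENNReal.coe_zero]
    exact zero_le

lemma lt_empFlow_univ_of_empPair_notMem [Nonempty X] {T : ℝ} {ω : Traj X} {m : NNReal}
    (h : empPair T ω ∉ univ ×ˢ {ν | ν.mass ≤ m}) : (m : ℝ≥0∞) < empFlow T ω univ := by
  have lt_mass : m < (toFM (empFlow T ω)).mass := by simpa [empPair] using h
  exact (ENNReal.coe_lt_coe.2 lt_mass).trans_le (mass_toFM_le _)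

end FlowMass

lemma limsup_iSup_log_measure_le {ι Ω : Type*} [MeasurableSpace Ω] {P : ι → Measure Ω}
    {A : ℝ → Set Ω} {c : ℝ}
    (h : ∀ᶠ T in atTop, ∀ i, P i (A T) ≤ ENNReal.ofReal (Real.exp (c * T))) :
    limsup (fun T : ℝ => ⨆ i, ((1 / T : ℝ) : EReal) * ENNReal.log (P i (A T))) atTop ≤ c := by
  refine limsup_le_of_le (by isBoundedDefault) ?_
  filter_upwards [h, eventually_gt_atTop 0] with T hPT hT
  refine iSup_le fun i => ?_
  calc ((1 / T : ℝ) : EReal) * ENNReal.log (P i (A T))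
      ≤ ((1 / T : ℝ) : EReal) * ENNReal.log (ENNReal.ofReal (Real.exp (c * T))) :=
        mul_le_mul_of_nonneg_left (ENNReal.log_le_log (hPT i))
          (EReal.coe_nonneg.2 (by positivity))
    _ = c := by
        rw [← EReal.exp_coe, EReal.log_exp, ← EReal.coe_mul]
        field_simp

theorem exponential_tightness_general {ρ : E → ℝ} (hρ : BddAbove (range ρ)) {κ : E → Measure E}
    {P : E → Measure (Traj E)} (hP : ∀ x, IsChainLaw ρ κ x (P x)) :
    (∀ a : ℕ → ℝ, Tendsto a atTop atTop →
      Tendsto (fun ℓ : ℕ =>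
          limsup (fun T : ℝ => ⨆ x : E,
            ((1 / T : ℝ) : EReal) * ENNReal.log
              (P x {ω : Traj E | ENNReal.ofReal (a ℓ) < empFlow T ω univ})) atTop)
        atTop (𝓝 (⊥ : EReal))) ∧
    (∀ b : ℝ, ∃ K : Set (ProbabilityMeasure E × FiniteMeasure (E × E)), IsCompact K ∧
      limsup (fun T : ℝ => ⨆ x : E,
          ((1 / T : ℝ) : EReal) * ENNReal.log (P x {ω : Traj E | empPair T ω ∉ K})) atTop
        ≤ ((-b : ℝ) : EReal)) := by
  obtain ⟨R, hR, hρR⟩ := hρ.exists_ge 1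
  replace hρR : ∀ y, ρ y ≤ R := forall_mem_range.1 hρR
  set C := R * (Real.exp 1 - 1)
  have tail_bound (a : ℝ) : ∀ᶠ T in atTop, ∀ x,
      P x {ω | ENNReal.ofReal a < empFlow T ω univ} ≤
        ENNReal.ofReal (Real.exp ((C - a) * T)) := by
    filter_upwards [eventually_gt_atTop 0] with T hT x
    exact (hP x).measure_lt_empFlow_univ_le (one_pos.trans_le hR) hρR hT a
  constructor
  · intro a ha
    rw [EReal.tendsto_nhds_bot_iff_real]
    intro c
    filter_upwards [ha.eventually_gt_atTop (C - c)] with ℓ hℓ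
    refine (limsup_iSup_log_measure_le (tail_bound (a ℓ))).trans_lt ?_
    exact EReal.coe_lt_coe (by linarith)
  · intro b
    refine ⟨univ ×ˢ {ν | ν.mass ≤ (C + b).toNNReal},
      isCompact_univ.prod (isCompact_setOfPred_finiteMeasure_le_of_compactSpace (E × E) _), ?_⟩
    refine limsup_iSup_log_measure_le ((tail_bound (C + b)).mono fun T hT x => ?_)
    calc P x {ω | empPair T ω ∉ univ ×ˢ {ν | ν.mass ≤ (C + b).toNNReal}}
        ≤ P x {ω | ENNReal.ofReal (C + b) < empFlow T ω univ} :=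
          measure_mono fun _ => lt_empFlow_univ_of_empPair_notMem
      _ ≤ ENNReal.ofReal (Real.exp (-b * T)) := by simpa only [sub_add_cancel_left] using hT x

/-- **Lemma 4.2** (exponential tightness). For any sequence `a_ℓ → ∞`,
`lim_ℓ limsup_T sup_x (1/T) log P_x(Q_T(1) > a_ℓ) = -∞`; in particular the family
`P_x ∘ (μ_T,Q_T)⁻¹` is exponentially tight, uniformly in `x ∈ E`. -/
theorem exponential_tightness (S : ChainSetting E)
    (P : E → Measure (Traj E)) (hP : ∀ x, IsChainLaw S.r S.skel x (P x)) :
    (∀ a : ℕ → ℝ, Tendsto a atTop atTop →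
      Tendsto (fun ℓ : ℕ =>
          Filter.limsup (fun T : ℝ => ⨆ x : E,
            ((1 / T : ℝ) : EReal) * ENNReal.log
              (P x {ω : Traj E | ENNReal.ofReal (a ℓ) < empFlow T ω Set.univ})) atTop)
        atTop (𝓝 (⊥ : EReal))) ∧
    (∀ b : ℝ, ∃ K : Set (ProbabilityMeasure E × FiniteMeasure (E × E)), IsCompact K ∧
      Filter.limsup (fun T : ℝ => ⨆ x : E,
          ((1 / T : ℝ) : EReal) * ENNReal.log (P x {ω : Traj E | empPair T ω ∉ K})) atTop
        ≤ ((-b : ℝ) : EReal)) := by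
  exact exponential_tightness_general (isCompact_range S.r_cont).bddAbove hP

end
end

section
/- If I(μ,Q) < +∞ then Q is absolutely continuous with respect to λ×λ, say dQ = q dλ×dλ, and writing dμ = ϱ dλ + dμ_s for the Lebesgue decomposition of μ with respect to λ, one has I(μ,Q) = ∫∫ λ(dx)λ(dy) Φ(q(x,y), ϱ(x)r(x)p(x,y)) + μ_s(r), where Φ(a,b) := a log(a/b) − a + b. In particular, if μ is singular with respect to λ then I(μ,Q) < ∞ forces Q = 0. -/
open MeasureTheory ProbabilityTheory Filter Topology Set ENNReal

noncomputable section

/-- The convex function `Ψ(a) = a log a - (a - 1)` (with `Ψ(0) = 1`), extended to `ℝ≥0∞`. -/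
def PsiE (a : ℝ≥0∞) : ℝ≥0∞ :=
  if a = ∞ then ∞ else ENNReal.ofReal (a.toReal * Real.log a.toReal - a.toReal + 1)

open Classical in
/-- The joint rate functional `I(μ,Q)` of (2.3):
`I(μ,Q) = ∫∫ μ(dx)c(x,dy) Ψ(dQ/(μ(dx)c(x,dy)))` if the two marginals of `Q` coincide and
`Q ≪ μ(dx)c(x,dy)`, and `+∞` otherwise. -/
def ChainSetting.rateI0 {E : Type*} [MeasurableSpace E] [TopologicalSpace E]
    (S : ChainSetting E) (μ : Measure E) (Q : Measure (E × E)) : ℝ≥0∞ :=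
  if Q.fst = Q.snd ∧ Q ≪ S.muc μ
  then ∫⁻ z, PsiE (Q.rnDeriv (S.muc μ) z) ∂(S.muc μ)
  else ∞

/-- The joint rate functional `I` on `M₁(E) × M₊(E×E)`. -/
def ChainSetting.rateI {E : Type*} [MeasurableSpace E] [TopologicalSpace E]
    (S : ChainSetting E) (q : ProbabilityMeasure E × FiniteMeasure (E × E)) : ℝ≥0∞ :=
  S.rateI0 (q.1 : Measure E) (q.2 : Measure (E × E))

/-- The convex lower semicontinuous function `Φ(a,b) = a log (a/b) - a + b`, extended to
`ℝ≥0∞` (with `Φ(0,b) = b` and `Φ(a,0) = ∞` for `a > 0`). -/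
def PhiE (a b : ℝ≥0∞) : ℝ≥0∞ :=
  if a = 0 then b
  else if a = ∞ ∨ b = 0 ∨ b = ∞ then ∞
  else ENNReal.ofReal (a.toReal * Real.log (a.toReal / b.toReal) - a.toReal + b.toReal)

variable {E : Type*} [MeasurableSpace E] [TopologicalSpace E] [PolishSpace E]
  [CompactSpace E] [BorelSpace E] [Nonempty E]

/-!
Finiteness of `I(μ,Q)` forces `Q ≪ μ(dx)c(x,dy) ≪ μ × λ`, so the second marginal of `Q` is
absolutely continuous with respect to `λ`, and so is the first one, because the marginals coincide.
Hence `Q` does not charge the part `μ_s(dx)c(x,dy)` of the reference measure: there the density of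
`Q` vanishes and the integrand is `Ψ(0) = 1`, which contributes the total mass `μ_s(r)`. On the
remaining part, whose `λ × λ`-density is `b = ϱ(x)r(x)p(x,y)`, the identity `b Ψ(a) = Φ(b a, b)`
turns the integrand into `Φ`.
-/

section Entropy

lemma PsiE_zero : PsiE 0 = 1 := by simp [PsiE]

lemma measurable_PsiE : Measurable PsiE := by
  unfold PsiE
  exact Measurable.ite (measurableSet_singleton _) measurable_const (by fun_prop)

lemma PhiE_mul_self (a : ℝ≥0∞) {b : ℝ≥0∞} (hb : b ≠ ∞) : PhiE (b * a) b = b * PsiE a := by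
  rcases eq_or_ne b 0 with rfl | hb₀
  · simp [PhiE]
  rcases eq_or_ne a 0 with rfl | ha₀
  · simp [PhiE, PsiE_zero]
  rcases eq_or_ne a ∞ with rfl | ha
  · simp [PhiE, PsiE, hb₀]
  have hb_pos : 0 < b.toReal := ENNReal.toReal_pos hb₀ hb
  have hPhi : PhiE (b * a) b =
      ENNReal.ofReal (b.toReal * (a.toReal * Real.log a.toReal - a.toReal + 1)) := by
    simp only [PhiE, mul_eq_zero, hb₀, ha₀, ENNReal.mul_ne_top hb ha, hb, or_self, if_false,
      ENNReal.toReal_mul, mul_div_cancel_left₀ _ hb_pos.ne']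
    ring_nf
  rw [hPhi, ENNReal.ofReal_mul hb_pos.le, ENNReal.ofReal_toReal hb, PsiE, if_neg ha]

variable {α : Type*} [MeasurableSpace α] {P P_s Q ν : Measure α} {g : α → ℝ≥0∞}
  [SigmaFinite P] [Q.HaveLebesgueDecomposition P]

lemma rnDeriv_ae_eq_zero_of_eq_add (hP : P = ν + P_s) (hQs : Q ⟂ₘ P_s) :
    Q.rnDeriv P =ᵐ[P_s] 0 :=
  Measure.rnDeriv_eq_zero_of_mutuallySingular hQs
    (hP ▸ Measure.le_add_left le_rfl : P_s ≤ P).absolutelyContinuous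

lemma rnDeriv_ae_eq_mul_rnDeriv [SigmaFinite ν] (hg : Measurable g)
    (hP : P = ν.withDensity g + P_s) (hQ : Q ≪ P) (hQs : Q ⟂ₘ P_s) :
    Q.rnDeriv ν =ᵐ[ν] g * Q.rnDeriv P := by
  have hf : Measurable (Q.rnDeriv P) := Measure.measurable_rnDeriv _ _
  have hQ_eq : Q = ν.withDensity (g * Q.rnDeriv P) :=
    calc Q = P.withDensity (Q.rnDeriv P) := (Measure.withDensity_rnDeriv_eq Q P hQ).symm
      _ = (ν.withDensity g).withDensity (Q.rnDeriv P) + P_s.withDensity (Q.rnDeriv P) := by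
        rw [← withDensity_add_measure, ← hP]
      _ = ν.withDensity (g * Q.rnDeriv P) := by
        rw [withDensity_congr_ae (rnDeriv_ae_eq_zero_of_eq_add hP hQs), withDensity_zero,
          add_zero, withDensity_mul _ hg hf]
  conv_lhs => rw [hQ_eq]
  exact Measure.rnDeriv_withDensity ν (hg.mul hf)

lemma lintegral_PsiE_rnDeriv_eq_add [SigmaFinite ν] (hg : Measurable g)
    (hg_fin : ∀ᵐ z ∂ν, g z ≠ ∞) (hP : P = ν.withDensity g + P_s) (hQ : Q ≪ P)
    (hQs : Q ⟂ₘ P_s) :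
    ∫⁻ z, PsiE (Q.rnDeriv P z) ∂P = ∫⁻ z, PhiE (Q.rnDeriv ν z) (g z) ∂ν + P_s univ := by
  have hf : Measurable fun z => PsiE (Q.rnDeriv P z) :=
    measurable_PsiE.comp (Measure.measurable_rnDeriv _ _)
  have hdensity : ∫⁻ z, PsiE (Q.rnDeriv P z) ∂ν.withDensity g =
      ∫⁻ z, PhiE (Q.rnDeriv ν z) (g z) ∂ν := by
    rw [lintegral_withDensity_eq_lintegral_mul ν hg hf]
    refine lintegral_congr_ae ?_
    filter_upwards [rnDeriv_ae_eq_mul_rnDeriv hg hP hQ hQs, hg_fin] with z hz hgz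
    rw [hz, Pi.mul_apply, Pi.mul_apply, PhiE_mul_self _ hgz]
  have hsingular : ∫⁻ z, PsiE (Q.rnDeriv P z) ∂P_s = P_s univ := by
    rw [← lintegral_one]
    refine lintegral_congr_ae ((rnDeriv_ae_eq_zero_of_eq_add hP hQs).mono fun z hz => ?_)
    simp only [hz, Pi.zero_apply, PsiE_zero]
  calc ∫⁻ z, PsiE (Q.rnDeriv P z) ∂P
      = ∫⁻ z, PsiE (Q.rnDeriv P z) ∂(ν.withDensity g + P_s) := by rw [← hP]
    _ = ∫⁻ z, PhiE (Q.rnDeriv ν z) (g z) ∂ν + P_s univ := by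
      rw [lintegral_add_measure, hdensity, hsingular]

end Entropy

lemma mutuallySingular_of_map {α β : Type*} [MeasurableSpace α] [MeasurableSpace β]
    {μ ν : Measure α} {f : α → β} (hf : Measurable f) (h : μ.map f ⟂ₘ ν.map f) : μ ⟂ₘ ν := by
  obtain ⟨s, hs, hμs, hνs⟩ := h
  rw [Measure.map_apply hf hs] at hμs
  rw [Measure.map_apply hf hs.compl] at hνs
  exact ⟨f ⁻¹' s, hf hs, hμs, hνs⟩

namespace ChainSetting

section

variable {X : Type*} [MeasurableSpace X] [TopologicalSpace X] (S : ChainSetting X)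

instance : IsProbabilityMeasure S.lam := S.lam_prob

/-- The density `c(x,y) = r(x) p(x,y)` of the jump rates `c(x,dy)` with respect to `λ`, as an
`ℝ≥0∞`-valued function of the pair `(x,y)`. -/
def jumpDensity (z : X × X) : ℝ≥0∞ := ENNReal.ofReal (S.r z.1 * S.p z.1 z.2)

lemma lintegral_jumpDensity (x : X) :
    ∫⁻ y, S.jumpDensity (x, y) ∂S.lam = ENNReal.ofReal (S.r x) := by
  have hp : Integrable (S.p x) S.lam := .of_integral_ne_zero (by simp [S.p_int x])
  have hrp : ∀ y, 0 ≤ S.r x * S.p x y := fun y => mul_nonneg (S.r_nonneg x) (S.p_pos x y).le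
  simp only [jumpDensity]
  rw [← ofReal_integral_eq_lintegral_ofReal (hp.const_mul _) (ae_of_all _ hrp),
    integral_const_mul, S.p_int, mul_one]

instance (μ : Measure X) [SigmaFinite μ] : SigmaFinite (S.muc μ) :=
  SigmaFinite.withDensity_ofReal _

lemma muc_add (μ ν : Measure X) [SFinite μ] [SFinite ν] :
    S.muc (μ + ν) = S.muc μ + S.muc ν := by
  simp only [muc, Measure.add_prod, withDensity_add_measure]

lemma muc_absolutelyContinuous (μ : Measure X) : S.muc μ ≪ μ.prod S.lam :=
  withDensity_absolutelyContinuous _ _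

variable {S} {μ : Measure X} {Q : Measure (X × X)}

lemma snd_absolutelyContinuous_lam (hQ : Q ≪ S.muc μ) : Q.snd ≪ S.lam :=
  ((hQ.trans (S.muc_absolutelyContinuous μ)).map measurable_snd).trans
    Measure.quasiMeasurePreserving_snd.absolutelyContinuous

lemma mutuallySingular_muc_of_fst (h : Q.fst ⟂ₘ μ) : Q ⟂ₘ S.muc μ := by
  have hfst : (S.muc μ).fst ≪ μ :=
    ((S.muc_absolutelyContinuous μ).map measurable_fst).trans
      Measure.quasiMeasurePreserving_fst.absolutelyContinuous
  exact mutuallySingular_of_map measurable_fst (h.mono_ac .rfl hfst)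

lemma rateI0_eq_lintegral (hmarg : Q.fst = Q.snd) (hQ : Q ≪ S.muc μ) :
    S.rateI0 μ Q = ∫⁻ z, PsiE (Q.rnDeriv (S.muc μ) z) ∂(S.muc μ) :=
  if_pos ⟨hmarg, hQ⟩

lemma fst_eq_snd_and_absolutelyContinuous_of_rateI0_ne_top (h : S.rateI0 μ Q ≠ ∞) :
    Q.fst = Q.snd ∧ Q ≪ S.muc μ :=
  not_imp_comm.1 (fun hnot => if_neg hnot) h

variable (S)

lemma ae_rnDeriv_mul_jumpDensity_ne_top (μ : Measure X) [SigmaFinite μ] :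
    ∀ᵐ z ∂(S.lam.prod S.lam), μ.rnDeriv S.lam z.1 * S.jumpDensity z ≠ ∞ :=
  (Measure.quasiMeasurePreserving_fst.ae (Measure.rnDeriv_lt_top μ S.lam)).mono fun _ hz =>
    ENNReal.mul_ne_top hz.ne ENNReal.ofReal_ne_top

end

section

variable {X : Type*} [MeasurableSpace X] [TopologicalSpace X] [SecondCountableTopology X]
  [OpensMeasurableSpace X] (S : ChainSetting X)

lemma measurable_jumpDensity : Measurable S.jumpDensity :=
  (((S.r_cont.comp continuous_fst).mul S.p_cont).measurable).ennreal_ofReal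

lemma muc_univ (μ : Measure X) : S.muc μ univ = ∫⁻ x, ENNReal.ofReal (S.r x) ∂μ := by
  calc S.muc μ univ = ∫⁻ z, S.jumpDensity z ∂(μ.prod S.lam) := by
        rw [muc, withDensity_apply _ MeasurableSet.univ, Measure.restrict_univ]; rfl
    _ = ∫⁻ x, ∫⁻ y, S.jumpDensity (x, y) ∂S.lam ∂μ :=
        lintegral_prod _ S.measurable_jumpDensity.aemeasurable
    _ = ∫⁻ x, ENNReal.ofReal (S.r x) ∂μ := by simp only [S.lintegral_jumpDensity]

lemma muc_withDensity (μ : Measure X) {ρ : X → ℝ≥0∞} (hρ : Measurable ρ) :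
    S.muc (μ.withDensity ρ) =
      (μ.prod S.lam).withDensity fun z => ρ z.1 * S.jumpDensity z := by
  rw [muc, prod_withDensity_left hρ]
  exact (withDensity_mul _ (hρ.comp measurable_fst) S.measurable_jumpDensity).symm

lemma measurable_rnDeriv_mul_jumpDensity (μ : Measure X) :
    Measurable fun z : X × X => μ.rnDeriv S.lam z.1 * S.jumpDensity z :=
  ((Measure.measurable_rnDeriv _ _).comp measurable_fst).mul S.measurable_jumpDensity

lemma muc_eq_withDensity_add_muc_singularPart (μ : Measure X) [SigmaFinite μ] :
    S.muc μ =
      (S.lam.prod S.lam).withDensity (fun z => μ.rnDeriv S.lam z.1 * S.jumpDensity z) +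
        S.muc (μ.singularPart S.lam) := by
  conv_lhs => rw [← Measure.rnDeriv_add_singularPart μ S.lam]
  rw [muc_add, muc_withDensity _ _ (Measure.measurable_rnDeriv _ _)]

end

end ChainSetting

open ChainSetting in
theorem rateI_representation_general {X : Type*} [MeasurableSpace X] [TopologicalSpace X]
    [SecondCountableTopology X] [OpensMeasurableSpace X] (S : ChainSetting X)
    (μ : Measure X) [SigmaFinite μ] (Q : Measure (X × X)) [SFinite Q]
    (hfin : S.rateI0 μ Q ≠ ∞) :
    Q ≪ S.lam.prod S.lam ∧
    S.rateI0 μ Q =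
      (∫⁻ z, PhiE (Q.rnDeriv (S.lam.prod S.lam) z)
          (μ.rnDeriv S.lam z.1 * ENNReal.ofReal (S.r z.1 * S.p z.1 z.2))
        ∂(S.lam.prod S.lam))
      + ∫⁻ x, ENNReal.ofReal (S.r x) ∂(μ.singularPart S.lam) ∧
    (μ ⟂ₘ S.lam → Q = 0) := by
  obtain ⟨hmarg, hQ⟩ := fst_eq_snd_and_absolutelyContinuous_of_rateI0_ne_top hfin
  have hfst : Q.fst ≪ S.lam := hmarg ▸ snd_absolutelyContinuous_lam hQ
  have hQ_singular {μ' : Measure X} (h : μ' ⟂ₘ S.lam) : Q ⟂ₘ S.muc μ' :=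
    mutuallySingular_muc_of_fst (h.symm.mono_ac hfst .rfl)
  have hQ_s := hQ_singular (Measure.mutuallySingular_singularPart μ S.lam)
  have hsplit := S.muc_eq_withDensity_add_muc_singularPart μ
  refine ⟨?_, ?_, fun hμ =>
    Measure.eq_zero_of_absolutelyContinuous_of_mutuallySingular hQ (hQ_singular hμ)⟩
  · exact (Measure.absolutelyContinuous_of_add_of_mutuallySingular (hsplit ▸ hQ) hQ_s).trans
      (withDensity_absolutelyContinuous _ _)
  · rw [rateI0_eq_lintegral hmarg hQ, ← S.muc_univ]
    exact lintegral_PsiE_rnDeriv_eq_add (S.measurable_rnDeriv_mul_jumpDensity μ)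
      (S.ae_rnDeriv_mul_jumpDensity_ne_top μ) hsplit hQ hQ_s

/-- Representation (2.4) of the rate function: if `I(μ,Q) < ∞` then `Q ≪ λ×λ` and, writing
`dμ = ϱ dλ + dμ_s` for the Lebesgue decomposition of `μ` and `q = dQ/d(λ×λ)`,
`I(μ,Q) = ∫∫ λ(dx)λ(dy) Φ(q(x,y), ϱ(x)r(x)p(x,y)) + μ_s(r)`. In particular, if `μ` is
singular with respect to `λ` then `Q = 0`. -/
theorem rateI_representation (S : ChainSetting E)
    (μ : Measure E) (hμ : IsProbabilityMeasure μ)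
    (Q : Measure (E × E)) (hQ : IsFiniteMeasure Q)
    (hfin : S.rateI0 μ Q ≠ ∞) :
    Q ≪ S.lam.prod S.lam ∧
    S.rateI0 μ Q =
      (∫⁻ z, PhiE (Q.rnDeriv (S.lam.prod S.lam) z)
          (μ.rnDeriv S.lam z.1 * ENNReal.ofReal (S.r z.1 * S.p z.1 z.2))
        ∂(S.lam.prod S.lam))
      + ∫⁻ x, ENNReal.ofReal (S.r x) ∂(μ.singularPart S.lam) ∧
    (μ ⟂ₘ S.lam → Q = 0) :=
  rateI_representation_general S μ Q hfin

end
end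

section
/- Let (μ,Q) ∈ M₁(E)×M₊(E×E) be such that I(μ,Q) < +∞. Then ∫∫ Q(dx,dy) log( 1/(r(x)p(x,y)) ) < +∞. -/
open MeasureTheory ProbabilityTheory Filter Topology Set ENNReal

noncomputable section

/-- The positive part of an extended real, as an extended nonnegative real. -/
def ePos (x : EReal) : ℝ≥0∞ := if x = ⊤ then ∞ else ENNReal.ofReal x.toReal

variable {E : Type*} [MeasurableSpace E] [TopologicalSpace E] [PolishSpace E]
  [CompactSpace E] [BorelSpace E] [Nonempty E]

/-!
With `w(x,y) = r(x) p(x,y)` the density of `μ(dx)c(x,dy)` with respect to `μ ⊗ λ`, the entropic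
bound `∫ log⁺ f dQ ≤ ∫ Ψ(dQ/dν) dν + ∫ f dν` is applied to `ν = w · (μ ⊗ λ)` and `f = 1/w`. Its
first term is then `I(μ,Q)`, and its second is at most the mass of `μ ⊗ λ`, since `w · (1/w) ≤ 1`.
-/

/-- The Fenchel–Young inequality for `Ψ` and its conjugate `b ↦ exp b - 1`, at `b = log t`. -/
lemma mul_log_le_klFun_add_sub_one {a t : ℝ} (ha : 0 ≤ a) (ht : 0 < t) :
    a * Real.log t ≤ InformationTheory.klFun a + (t - 1) := by
  rcases ha.eq_or_lt with rfl | ha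
  · simpa [InformationTheory.klFun_zero] using ht.le
  have log_div_le : Real.log t - Real.log a ≤ t / a - 1 := by
    simpa only [Real.log_div ht.ne' ha.ne'] using Real.log_le_sub_one_of_pos (div_pos ht ha)
  calc a * Real.log t = a * Real.log a + a * (Real.log t - Real.log a) := by ring
    _ ≤ a * Real.log a + a * (t / a - 1) := by gcongr
    _ = InformationTheory.klFun a + (t - 1) := by
      rw [InformationTheory.klFun_apply]
      field_simp
      ring

lemma PsiE_of_ne_top {a : ℝ≥0∞} (ha : a ≠ ∞) :
    PsiE a = ENNReal.ofReal (InformationTheory.klFun a.toReal) := by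
  rw [PsiE, if_neg ha, InformationTheory.klFun_apply, sub_add_eq_add_sub]

lemma ePos_eq_toENNReal : ePos = EReal.toENNReal := rfl

lemma ePos_log_of_one_le {t : ℝ≥0∞} (ht : 1 ≤ t) (ht' : t ≠ ∞) :
    ePos (ENNReal.log t) = ENNReal.ofReal (Real.log t.toReal) := by
  rw [ePos_eq_toENNReal, ENNReal.log_pos_real (one_pos.trans_le ht).ne' ht',
    EReal.real_coe_toENNReal]

lemma mul_ePos_log_le_PsiE_add (a t : ℝ≥0∞) : a * ePos (ENNReal.log t) ≤ PsiE a + t := by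
  rcases eq_or_ne a ∞ with rfl | ha
  · simp [PsiE]
  rcases eq_or_ne t ∞ with rfl | ht
  · simp
  rcases le_total t 1 with ht₁ | ht₁
  · simp [ePos_eq_toENNReal, EReal.toENNReal_of_nonpos (ENNReal.log_le_zero_iff.2 ht₁)]
  have young := mul_log_le_klFun_add_sub_one a.toReal_nonneg
    (ENNReal.toReal_pos (one_pos.trans_le ht₁).ne' ht)
  calc a * ePos (ENNReal.log t)
      = ENNReal.ofReal (a.toReal * Real.log t.toReal) := by
        rw [ePos_log_of_one_le ht₁ ht, ENNReal.ofReal_mul a.toReal_nonneg, ENNReal.ofReal_toReal ha]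
    _ ≤ ENNReal.ofReal (InformationTheory.klFun a.toReal + t.toReal) :=
        ENNReal.ofReal_le_ofReal (by linarith)
    _ ≤ ENNReal.ofReal (InformationTheory.klFun a.toReal) + ENNReal.ofReal t.toReal :=
        ENNReal.ofReal_add_le
    _ = PsiE a + t := by rw [PsiE_of_ne_top ha, ENNReal.ofReal_toReal ht]

section Entropy

variable {α : Type*} [MeasurableSpace α]

lemma lintegral_ePos_log_le_lintegral_PsiE_add {Q ν : Measure α}
    [Q.HaveLebesgueDecomposition ν] (hQν : Q ≪ ν) {f : α → ℝ≥0∞} (hf : AEMeasurable f ν) :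
    ∫⁻ z, ePos (ENNReal.log (f z)) ∂Q ≤ ∫⁻ z, PsiE (Q.rnDeriv ν z) ∂ν + ∫⁻ z, f z ∂ν := by
  have hlog : AEMeasurable (fun z ↦ ePos (ENNReal.log (f z))) ν :=
    (ENNReal.measurable_log.comp_aemeasurable hf).ereal_toENNReal
  calc ∫⁻ z, ePos (ENNReal.log (f z)) ∂Q
      = ∫⁻ z, Q.rnDeriv ν z * ePos (ENNReal.log (f z)) ∂ν := (lintegral_rnDeriv_mul hQν hlog).symm
    _ ≤ ∫⁻ z, PsiE (Q.rnDeriv ν z) + f z ∂ν :=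
        lintegral_mono fun z ↦ mul_ePos_log_le_PsiE_add _ _
    _ = ∫⁻ z, PsiE (Q.rnDeriv ν z) ∂ν + ∫⁻ z, f z ∂ν := lintegral_add_right' _ hf

lemma lintegral_inv_withDensity_le {ν : Measure α} {w : α → ℝ≥0∞} (hw : Measurable w) :
    ∫⁻ z, (w z)⁻¹ ∂(ν.withDensity w) ≤ ν univ :=
  calc ∫⁻ z, (w z)⁻¹ ∂(ν.withDensity w)
      ≤ ∫⁻ z, w z * (w z)⁻¹ ∂ν := lintegral_withDensity_le_lintegral_mul ν hw _
    _ ≤ ∫⁻ _, 1 ∂ν := lintegral_mono fun z ↦ ENNReal.mul_inv_le_one (w z)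
    _ = ν univ := lintegral_one

lemma lintegral_ePos_log_inv_le_of_absolutelyContinuous_withDensity {Q ν : Measure α}
    {w : α → ℝ≥0∞} [Q.HaveLebesgueDecomposition (ν.withDensity w)]
    (hQ : Q ≪ ν.withDensity w) (hw : Measurable w) :
    ∫⁻ z, ePos (ENNReal.log (w z)⁻¹) ∂Q
      ≤ ∫⁻ z, PsiE (Q.rnDeriv (ν.withDensity w) z) ∂(ν.withDensity w) + ν univ :=
  (lintegral_ePos_log_le_lintegral_PsiE_add (f := fun z ↦ (w z)⁻¹) hQ hw.inv.aemeasurable).trans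
    (add_le_add_right (lintegral_inv_withDensity_le hw) _)

end Entropy

theorem log_integrable_of_rateI_lt_top_general {X : Type*} [MeasurableSpace X]
    [TopologicalSpace X] [OpensMeasurableSpace (X × X)] (S : ChainSetting X)
    (μ : Measure X) [SigmaFinite μ] (Q : Measure (X × X)) [SFinite Q] :
    ∫⁻ z, ePos (ENNReal.log ((ENNReal.ofReal (S.r z.1 * S.p z.1 z.2))⁻¹)) ∂Q
      ≤ S.rateI0 μ Q + μ univ := by
  have := S.lam_prob
  have measurable_rate : Measurable fun z : X × X ↦ ENNReal.ofReal (S.r z.1 * S.p z.1 z.2) :=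
    ((S.r_cont.comp continuous_fst).mul S.p_cont).measurable.ennreal_ofReal
  have : SigmaFinite (S.muc μ) := SigmaFinite.withDensity_ofReal _
  have mass_prod : (μ.prod S.lam) univ = μ univ := by simp [← univ_prod_univ]
  unfold ChainSetting.rateI0
  split_ifs with h
  · rw [← mass_prod]
    exact lintegral_ePos_log_inv_le_of_absolutelyContinuous_withDensity h.2 measurable_rate
  · simp

/-- **Lemma 4.5**: if `I(μ,Q) < ∞` then `∫∫ Q(dx,dy) log (1/(r(x)p(x,y))) < ∞`. (Since
`log (1/(rp))` is bounded below on the compact `E × E` and `Q` is finite, this amounts to the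
finiteness of the integral of the positive part.) -/
theorem log_integrable_of_rateI_lt_top (S : ChainSetting E)
    (μ : Measure E) (hμ : IsProbabilityMeasure μ)
    (Q : Measure (E × E)) (hQ : IsFiniteMeasure Q)
    (hfin : S.rateI0 μ Q ≠ ∞) :
    ∫⁻ z, ePos (ENNReal.log ((ENNReal.ofReal (S.r z.1 * S.p z.1 z.2))⁻¹)) ∂Q < ∞ :=
  (log_integrable_of_rateI_lt_top_general S μ Q).trans_lt
    (ENNReal.add_lt_top.2 ⟨hfin.lt_top, measure_lt_top μ univ⟩)

end
end

section
/- Let {P_n^α, α ∈ A}_{n∈ℕ} be a sequence of families of probability measures on a completely regular topological space X. Assume that for each z ∈ X there exists a sequence of families of probability measures {P̃_n^α(z)} converging weakly to δ_z uniformly with respect to α ∈ A and such that limsup_{n→∞} sup_{α∈A} (1/n) Ent(P̃_n^α(z) | P_n^α) ≤ J(z) for some J : X → [0,+∞]. Then the sequence {P_n^α, α ∈ A} satisfies, uniformly with respect to α ∈ A, the large deviation lower bound with rate function sc⁻J, the lower semicontinuous envelope of J: for every open set A' ⊂ X, liminf_{n→∞} inf_{α∈A} (1/n) log P_n^α(A')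 ≥ −inf_{z∈A'} (sc⁻J)(z), where (sc⁻J)(z) := sup_{U∈N_z} inf_{w∈U} J(w) and N_z is the collection of open neighborhoods of z. -/
open MeasureTheory ProbabilityTheory Filter Topology Set ENNReal

noncomputable section


open Classical in
/-- Relative entropy `Ent(ν|μ) = ∫ log (dν/dμ) dν` (as upper integral minus lower integral,
and `⊤` when `ν` is not absolutely continuous with respect to `μ`). -/
def relEnt {α : Type*} [MeasurableSpace α] (ν μ : Measure α) : EReal :=
  if ν ≪ μ then
    ((∫⁻ x, ePos (ENNReal.log (ν.rnDeriv μ x)) ∂ν : ℝ≥0∞) : EReal)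
      - ((∫⁻ x, ePos (-(ENNReal.log (ν.rnDeriv μ x))) ∂ν : ℝ≥0∞) : EReal)
  else ⊤

/-- The lower semicontinuous envelope `sc⁻J(z) = sup_{U ∈ N_z} inf_{w ∈ U} J(w)`. -/
def scEnv {X : Type*} [TopologicalSpace X] (J : X → ℝ≥0∞) (z : X) : ℝ≥0∞ :=
  ⨆ (U : Set X) (_ : IsOpen U ∧ z ∈ U), ⨅ w ∈ U, J w

/-!
By the Donsker–Varadhan variational formula applied to `-log μ(S) · 𝟙_S`, a probability measure `μ`
cannot give a set `S` much less mass than `exp (-Ent(ν|μ))` as soon as `ν(S)` is close to `1`: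
`-ν(S) log μ(S) ≤ Ent(ν|μ) + log 2`. If `ν = P̃_n^α(z)` with `z` in the open set `S`, testing the
weak convergence against a function that separates `z` from `Sᶜ` gives `ν(S) → 1` uniformly in `α`;
after division by `n` the constant `log 2` disappears and the lower bound `-J z` remains. Finally,
`inf J ≤ sc⁻J` pointwise on an open set.
-/

section RelativeEntropy

open InformationTheory

variable {X : Type*} [MeasurableSpace X] {μ ν : Measure X}

lemma integrable_iff_lintegral_ofReal_ne_top {f : X → ℝ} (hf : AEStronglyMeasurable f μ) :
    Integrable f μ ↔
      ∫⁻ x, ENNReal.ofReal (f x) ∂μ ≠ ∞ ∧ ∫⁻ x, ENNReal.ofReal (-f x) ∂μ ≠ ∞ := by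
  have enorm_eq (x : X) : ‖f x‖ₑ = ENNReal.ofReal (f x) + ENNReal.ofReal (-f x) := by
    rcases le_total 0 (f x) with hx | hx
    · simp [Real.enorm_of_nonneg hx, ENNReal.ofReal_of_nonpos, hx]
    · simp [← enorm_neg (f x), Real.enorm_of_nonneg (neg_nonneg.2 hx), ENNReal.ofReal_of_nonpos, hx]
  rw [Integrable, and_iff_right hf, HasFiniteIntegral, lintegral_congr enorm_eq,
    lintegral_add_left' hf.aemeasurable.ennreal_ofReal, ENNReal.add_lt_top]
  simp only [lt_top_iff_ne_top]

/- `-llr ν μ = llr μ ν` holds `ν`-almost everywhere and `log t ≤ t`, so the left-hand side is at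
most `∫⁻ dμ/dν ∂ν`. -/
lemma lintegral_ofReal_neg_llr_le [SigmaFinite μ] [SigmaFinite ν] (hνμ : ν ≪ μ) :
    ∫⁻ x, ENNReal.ofReal (-llr ν μ x) ∂ν ≤ μ univ := by
  calc ∫⁻ x, ENNReal.ofReal (-llr ν μ x) ∂ν
      ≤ ∫⁻ x, μ.rnDeriv ν x ∂ν := by
        refine lintegral_mono_ae ?_
        filter_upwards [neg_llr hνμ] with x hx
        rw [← Pi.neg_apply, hx]
        exact ENNReal.ofReal_le_of_le_toReal (Real.log_le_self ENNReal.toReal_nonneg)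
    _ ≤ μ univ := Measure.lintegral_rnDeriv_le

lemma ePos_coe (x : ℝ) : ePos x = ENNReal.ofReal x := by
  rw [ePos, if_neg (EReal.coe_ne_top x), EReal.toReal_coe]

lemma relEnt_of_ac [SigmaFinite μ] [SigmaFinite ν] (hνμ : ν ≪ μ) :
    relEnt ν μ = ((∫⁻ x, ENNReal.ofReal (llr ν μ x) ∂ν : ℝ≥0∞) : EReal)
      - ((∫⁻ x, ENNReal.ofReal (-llr ν μ x) ∂ν : ℝ≥0∞) : EReal) := by
  have log_rnDeriv : ∀ᵐ x ∂ν, ENNReal.log (ν.rnDeriv μ x) = (llr ν μ x : EReal) := by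
    filter_upwards [Measure.rnDeriv_pos hνμ, hνμ.ae_le (Measure.rnDeriv_ne_top ν μ)] with x h0 htop
    rw [ENNReal.log_pos_real h0.ne' htop, llr]
  rw [relEnt, if_pos hνμ]
  congr 2 <;> refine lintegral_congr_ae ?_ <;> filter_upwards [log_rnDeriv] with x hx
  · rw [hx, ePos_coe]
  · rw [hx, ← EReal.coe_neg, ePos_coe]

lemma relEnt_of_integrable [SigmaFinite μ] [SigmaFinite ν] (hνμ : ν ≪ μ)
    (h_int : Integrable (llr ν μ) ν) : relEnt ν μ = ((∫ x, llr ν μ x ∂ν : ℝ) : EReal) := by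
  obtain ⟨hpos, hneg⟩ :=
    (integrable_iff_lintegral_ofReal_ne_top h_int.aestronglyMeasurable).1 h_int
  rw [relEnt_of_ac hνμ, integral_eq_lintegral_pos_part_sub_lintegral_neg_part h_int, EReal.coe_sub,
    EReal.coe_ennreal_toReal hpos, EReal.coe_ennreal_toReal hneg]

lemma relEnt_of_not_integrable [IsFiniteMeasure μ] [SigmaFinite ν]
    (h_int : ¬ Integrable (llr ν μ) ν) : relEnt ν μ = ⊤ := by
  by_cases hνμ : ν ≪ μ
  · have hneg : ∫⁻ x, ENNReal.ofReal (-llr ν μ x) ∂ν ≠ ∞ :=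
      ne_top_of_le_ne_top (measure_ne_top μ univ) (lintegral_ofReal_neg_llr_le hνμ)
    have hpos : ∫⁻ x, ENNReal.ofReal (llr ν μ x) ∂ν = ∞ := by
      by_contra hpos
      exact h_int ((integrable_iff_lintegral_ofReal_ne_top
        (stronglyMeasurable_llr ν μ).aestronglyMeasurable).2 ⟨hpos, hneg⟩)
    rw [relEnt_of_ac hνμ, hpos, EReal.coe_ennreal_top, ← EReal.coe_ennreal_toReal hneg,
      EReal.top_sub_coe]
  · rw [relEnt, if_neg hνμ]

lemma relEnt_eq_klDiv_of_measure_eq [IsFiniteMeasure μ] [IsFiniteMeasure ν]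
    (h_eq : ν univ = μ univ) : relEnt ν μ = klDiv ν μ := by
  by_cases h : ν ≪ μ ∧ Integrable (llr ν μ) ν
  · obtain ⟨hνμ, h_int⟩ := h
    rw [relEnt_of_integrable hνμ h_int, ← toReal_klDiv_of_measure_eq hνμ h_eq,
      EReal.coe_ennreal_toReal (klDiv_ne_top hνμ h_int)]
  · have h_kl : klDiv ν μ = ∞ := by rwa [← not_ne_iff, klDiv_ne_top_iff]
    have h_rel : relEnt ν μ = ⊤ := by
      rcases not_and_or.1 h with hνμ | h_int
      · rw [relEnt, if_neg hνμ]
      · exact relEnt_of_not_integrable h_int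
    rw [h_kl, h_rel, EReal.coe_ennreal_top]

/- Donsker–Varadhan: this is Gibbs' inequality for `ν` and the tilted measure `μ.tilted f`. -/
lemma integral_le_integral_llr_add_log_integral_exp [SigmaFinite μ] [IsProbabilityMeasure ν]
    {f : X → ℝ} (hνμ : ν ≪ μ) (h_int : Integrable (llr ν μ) ν) (hfν : Integrable f ν)
    (hfμ : Integrable (fun x ↦ Real.exp (f x)) μ) :
    ∫ x, f x ∂ν ≤ ∫ x, llr ν μ x ∂ν + Real.log (∫ x, Real.exp (f x) ∂μ) := by
  have : NeZero μ := ⟨fun hμ ↦ IsProbabilityMeasure.ne_zero ν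
    (Measure.absolutelyContinuous_zero_iff.1 (hμ ▸ hνμ))⟩
  have := isProbabilityMeasure_tilted hfμ
  have gibbs := integral_llr_add_sub_measure_univ_nonneg
    (hνμ.trans (absolutelyContinuous_tilted hfμ)) (integrable_llr_tilted_right hνμ hfν h_int hfμ)
  rw [integral_llr_tilted_right hνμ hfν hfμ h_int, probReal_univ, probReal_univ] at gibbs
  linarith

lemma neg_real_mul_log_real_le_toReal_klDiv_add_log_two [IsProbabilityMeasure μ]
    [IsProbabilityMeasure ν] (h_kl : klDiv ν μ ≠ ∞) {S : Set X} (hS : MeasurableSet S)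
    (hμS : 0 < μ.real S) :
    -(ν.real S * Real.log (μ.real S)) ≤ (klDiv ν μ).toReal + Real.log 2 := by
  obtain ⟨hνμ, h_int⟩ := klDiv_ne_top_iff.1 h_kl
  set f : X → ℝ := S.indicator fun _ ↦ -Real.log (μ.real S) with hf
  have exp_f : (fun x ↦ Real.exp (f x)) =
      S.indicator (fun _ ↦ (μ.real S)⁻¹) + Sᶜ.indicator fun _ ↦ 1 := by
    ext x
    by_cases hx : x ∈ S <;> simp [hf, hx, Real.exp_neg, Real.exp_log hμS]
  have hi : Integrable (S.indicator fun _ ↦ (μ.real S)⁻¹) μ := (integrable_const _).indicator hS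
  have hic : Integrable (Sᶜ.indicator fun _ ↦ (1 : ℝ)) μ :=
    (integrable_const _).indicator hS.compl
  have hfμ : Integrable (fun x ↦ Real.exp (f x)) μ := exp_f ▸ hi.add hic
  have integral_exp_le : ∫ x, Real.exp (f x) ∂μ ≤ 2 :=
    calc ∫ x, Real.exp (f x) ∂μ
        = 1 + μ.real Sᶜ := by
          rw [exp_f, integral_add' hi hic, integral_indicator_const _ hS,
            integral_indicator_const _ hS.compl, smul_eq_mul, smul_eq_mul,
            mul_inv_cancel₀ hμS.ne', mul_one]
      _ ≤ 2 := by linarith [measureReal_le_one (μ := μ) (s := Sᶜ)]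
  calc -(ν.real S * Real.log (μ.real S))
      = ∫ x, f x ∂ν := by rw [hf, integral_indicator_const _ hS, smul_eq_mul, mul_neg]
    _ ≤ ∫ x, llr ν μ x ∂ν + Real.log (∫ x, Real.exp (f x) ∂μ) :=
        integral_le_integral_llr_add_log_integral_exp hνμ h_int
          ((integrable_const _).indicator hS) hfμ
    _ ≤ ∫ x, llr ν μ x ∂ν + Real.log 2 := by
        gcongr
        exact integral_exp_pos hfμ
    _ = (klDiv ν μ).toReal + Real.log 2 := by
        rw [toReal_klDiv_of_measure_eq hνμ (by simp only [measure_univ])]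

lemma neg_div_le_mul_log_of_mul_relEnt_le [IsProbabilityMeasure μ] [IsProbabilityMeasure ν]
    {r b q : ℝ} (hr : 0 < r) (h_ent : ((1 / r : ℝ) : EReal) * relEnt ν μ ≤ b) {S : Set X}
    (hS : MeasurableSet S) (hq : 0 < q) (hνS : q ≤ ν.real S) :
    ((-((b + Real.log 2 / r) / q) : ℝ) : EReal) ≤ ((1 / r : ℝ) : EReal) * ENNReal.log (μ S) := by
  rw [relEnt_eq_klDiv_of_measure_eq (by simp only [measure_univ])] at h_ent
  have h_kl : klDiv ν μ ≠ ∞ := by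
    intro h_top
    rw [h_top, EReal.coe_ennreal_top, EReal.coe_mul_top_of_pos (by positivity)] at h_ent
    exact EReal.coe_ne_top b (top_le_iff.1 h_ent)
  rw [← EReal.coe_ennreal_toReal h_kl, ← EReal.coe_mul, EReal.coe_le_coe_iff] at h_ent
  have hμS : 0 < μ.real S := by
    refine measureReal_nonneg.lt_of_ne' fun hμS ↦ (hq.trans_le hνS).ne' ?_
    rw [measureReal_eq_zero_iff] at hμS ⊢
    exact (klDiv_ne_top_iff.1 h_kl).1 hμS
  have hL : Real.log (μ.real S) ≤ 0 := Real.log_nonpos hμS.le measureReal_le_one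
  have h_event : -(q * Real.log (μ.real S)) ≤ (klDiv ν μ).toReal + Real.log 2 :=
    calc -(q * Real.log (μ.real S))
        ≤ -(ν.real S * Real.log (μ.real S)) := neg_le_neg (mul_le_mul_of_nonpos_right hνS hL)
      _ ≤ (klDiv ν μ).toReal + Real.log 2 :=
        neg_real_mul_log_real_le_toReal_klDiv_add_log_two h_kl hS hμS
  rw [ENNReal.log_pos_real' hμS, ← EReal.coe_mul, EReal.coe_le_coe_iff, neg_le, le_div_iff₀ hq,
    ← measureReal_def]
  calc -(1 / r * Real.log (μ.real S)) * q
      = 1 / r * -(q * Real.log (μ.real S)) := by ring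
    _ ≤ 1 / r * ((klDiv ν μ).toReal + Real.log 2) := by gcongr
    _ = 1 / r * (klDiv ν μ).toReal + Real.log 2 / r := by ring
    _ ≤ b + Real.log 2 / r := by gcongr

end RelativeEntropy

section WeakConvergence

variable {X : Type*} [TopologicalSpace X]

/-- Weak convergence of the families `Q i`, indexed by `A`, to the Dirac mass at `z` along `l`,
uniformly over `A`. The supremum is taken in `ℝ≥0∞` so that it never has a junk value. -/
def TendstoDiracUniformly [MeasurableSpace X] {ι A : Type*} (Q : ι → A → Measure X)
    (l : Filter ι) (z : X) : Prop :=
  ∀ f : BoundedContinuousFunction X ℝ,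
    Tendsto (fun i ↦ ⨆ α, ENNReal.ofReal |(∫ x, f x ∂Q i α) - f z|) l (𝓝 0)

lemma exists_boundedContinuousFunction_eq_zero_indicator_compl_le [CompletelyRegularSpace X]
    {S : Set X} (hS : IsOpen S) {z : X} (hz : z ∈ S) :
    ∃ f : BoundedContinuousFunction X ℝ, f z = 0 ∧ ∀ x, Sᶜ.indicator 1 x ≤ f x := by
  obtain ⟨f, hf_cont, hfz, hf_one⟩ := CompletelyRegularSpace.completely_regular_isOpen z S hS hz
  refine ⟨BoundedContinuousFunction.ofNormedAddCommGroup (fun x ↦ (f x : ℝ))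
    (continuous_subtype_val.comp hf_cont) 1 fun x ↦ ?_, by simp [hfz], fun x ↦ ?_⟩
  · rw [Real.norm_of_nonneg (f x).2.1]
    exact (f x).2.2
  · refine indicator_le' (fun x hx ↦ ?_) (fun x _ ↦ (f x).2.1) x
    simp [hf_one hx]

lemma TendstoDiracUniformly.eventually_forall_lt_real [CompletelyRegularSpace X]
    [MeasurableSpace X] [OpensMeasurableSpace X] {ι A : Type*} {Q : ι → A → Measure X}
    {l : Filter ι} {z : X} (h : TendstoDiracUniformly Q l z)
    (hQ : ∀ i α, IsProbabilityMeasure (Q i α)) {S : Set X} (hS : IsOpen S) (hz : z ∈ S) {ε : ℝ}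
    (hε : 0 < ε) : ∀ᶠ i in l, ∀ α, 1 - ε < (Q i α).real S := by
  obtain ⟨f, hfz, hf⟩ := exists_boundedContinuousFunction_eq_zero_indicator_compl_le hS hz
  filter_upwards [(h f).eventually_lt_const (ENNReal.ofReal_pos.2 hε)] with i hi α
  have hSc : (Q i α).real Sᶜ < ε :=
    calc (Q i α).real Sᶜ
        = ∫ x, Sᶜ.indicator 1 x ∂Q i α := (integral_indicator_one hS.measurableSet.compl).symm
      _ ≤ ∫ x, f x ∂Q i α := integral_mono
          ((integrable_const (1 : ℝ)).indicator hS.measurableSet.compl) (f.integrable _) hf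
      _ ≤ |(∫ x, f x ∂Q i α) - f z| := by rw [hfz, sub_zero]; exact le_abs_self _
      _ < ε := (ENNReal.ofReal_lt_ofReal_iff hε).1 ((le_iSup_of_le α le_rfl).trans_lt hi)
  rw [probReal_compl_eq_one_sub hS.measurableSet] at hSc
  linarith

end WeakConvergence

lemma exists_pos_add_div_one_sub_lt {a b : ℝ} (hba : b < a) :
    ∃ ε > 0, ε < 1 ∧ (b + ε) / (1 - ε) < a := by
  have h_lim : Tendsto (fun ε : ℝ ↦ (b + ε) / (1 - ε)) (𝓝[>] 0) (𝓝 b) := by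
    have h_cont : ContinuousAt (fun ε : ℝ ↦ (b + ε) / (1 - ε)) 0 := by
      fun_prop (disch := norm_num)
    simpa using h_cont.tendsto.mono_left nhdsWithin_le_nhds
  have h_ev := (h_lim.eventually_lt_const hba).and (Ioo_mem_nhdsGT zero_lt_one)
  obtain ⟨ε, hε_lt, hε⟩ := h_ev.exists
  exact ⟨ε, hε.1, hε.2, hε_lt⟩

lemma le_scEnv_of_forall_le {X : Type*} [TopologicalSpace X] {J : X → ℝ≥0∞} {S : Set X}
    (hS : IsOpen S) {c : EReal} (hc : ∀ w ∈ S, c ≤ J w) {z : X} (hz : z ∈ S) : c ≤ scEnv J z := by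
  have h_iInf : c.toENNReal ≤ ⨅ w ∈ S, J w :=
    le_iInf₂ fun w hw ↦ by simpa using EReal.toENNReal_le_toENNReal (hc w hw)
  have h_scEnv : ⨅ w ∈ S, J w ≤ scEnv J z :=
    le_iSup₂ (f := fun (U : Set X) (_ : IsOpen U ∧ z ∈ U) ↦ ⨅ w ∈ U, J w) S ⟨hS, hz⟩
  calc c ≤ c.toENNReal := by rw [EReal.coe_toENNReal_eq_max]; exact le_max_right _ _
    _ ≤ scEnv J z := EReal.coe_ennreal_le_coe_ennreal_iff.2 (h_iInf.trans h_scEnv)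

section LowerBound

variable {X : Type*} [TopologicalSpace X] [CompletelyRegularSpace X] [MeasurableSpace X]
  [OpensMeasurableSpace X] {ι A : Type*} {l : Filter ι} {r : ι → ℝ}

lemma TendstoDiracUniformly.neg_limsup_relEnt_le_liminf_log {P Q : ι → A → Measure X} {z : X}
    (hQz : TendstoDiracUniformly Q l z) (hr : Tendsto r l atTop)
    (hP : ∀ i α, IsProbabilityMeasure (P i α)) (hQ : ∀ i α, IsProbabilityMeasure (Q i α))
    {S : Set X} (hS : IsOpen S) (hz : z ∈ S) :
    -limsup (fun i ↦ ⨆ α, ((1 / r i : ℝ) : EReal) * relEnt (Q i α) (P i α)) l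
      ≤ liminf (fun i ↦ ⨅ α, ((1 / r i : ℝ) : EReal) * ENNReal.log (P i α S)) l := by
  rw [EReal.neg_le]
  refine EReal.le_of_forall_lt_iff_le.1 fun a ha ↦ ?_
  obtain ⟨b, hb, hba⟩ := EReal.lt_iff_exists_real_btwn.1 ha
  obtain ⟨ε, hε, hε_one, hεa⟩ := exists_pos_add_div_one_sub_lt (EReal.coe_lt_coe_iff.1 hba)
  have h_ent := eventually_lt_of_limsup_lt hb
  have h_mass := hQz.eventually_forall_lt_real hQ hS hz hε
  have h_log : ∀ᶠ i in l, Real.log 2 / r i ≤ ε :=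
    (hr.const_div_atTop (Real.log 2)).eventually_le_const hε
  rw [EReal.neg_le]
  refine le_liminf_of_le (by isBoundedDefault) ?_
  filter_upwards [h_ent, h_mass, h_log, hr.eventually_gt_atTop 0] with i hi_ent hi_mass hi_log hri
  refine le_iInf fun α ↦ ?_
  have h_ent_α : ((1 / r i : ℝ) : EReal) * relEnt (Q i α) (P i α) ≤ b :=
    (le_iSup_of_le α le_rfl).trans hi_ent.le
  calc (-a : EReal)
      ≤ ((-((b + Real.log 2 / r i) / (1 - ε)) : ℝ) : EReal) := by
        rw [← EReal.coe_neg, EReal.coe_le_coe_iff, neg_le_neg_iff]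
        refine le_trans ?_ hεa.le
        gcongr
    _ ≤ ((1 / r i : ℝ) : EReal) * ENNReal.log (P i α S) :=
        neg_div_le_mul_log_of_mul_relEnt_le hri h_ent_α hS.measurableSet (sub_pos.2 hε_one)
          (hi_mass α).le

theorem lower_bound_from_entropy_general (hr : Tendsto r l atTop) (P : ι → A → Measure X)
    (hP : ∀ i α, IsProbabilityMeasure (P i α)) (J : X → ℝ≥0∞) {S : Set X} (hS : IsOpen S)
    (h : ∀ z ∈ S, ∃ Q : ι → A → Measure X, (∀ i α, IsProbabilityMeasure (Q i α)) ∧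
      TendstoDiracUniformly Q l z ∧
      limsup (fun i ↦ ⨆ α, ((1 / r i : ℝ) : EReal) * relEnt (Q i α) (P i α)) l ≤ J z) :
    -(⨅ z ∈ S, (scEnv J z : EReal))
      ≤ liminf (fun i ↦ ⨅ α, ((1 / r i : ℝ) : EReal) * ENNReal.log (P i α S)) l := by
  rw [EReal.neg_le]
  refine le_iInf₂ fun z hz ↦ le_scEnv_of_forall_le hS (fun w hw ↦ ?_) hz
  obtain ⟨Q, hQ, hQw, h_ent⟩ := h w hw
  exact EReal.neg_le.1 <| (EReal.neg_le_neg_iff.2 h_ent).trans <|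
    hQw.neg_limsup_relEnt_le_liminf_log hr hP hQ hS hw

end LowerBound

/-- **Lemma 5.1** (large deviations lower bound from approximating tilted measures). Let
`{P_n^α, α ∈ A}` be a sequence of families of probability measures on a completely regular
topological space `X`. Assume that for each `z ∈ X` there are probability measures
`P̃_n^α(z)` converging weakly to `δ_z` uniformly in `α` with
`limsup_n sup_α (1/n) Ent(P̃_n^α(z)|P_n^α) ≤ J(z)`. Then the lower large deviations bound
with rate function `sc⁻J` holds, uniformly in `α`. -/
theorem lower_bound_from_entropy {X : Type*} [TopologicalSpace X] [CompletelyRegularSpace X]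
    [MeasurableSpace X] [BorelSpace X] {A : Type*} [Nonempty A]
    (P : ℕ → A → Measure X) (hP : ∀ n α, IsProbabilityMeasure (P n α))
    (J : X → ℝ≥0∞)
    (h : ∀ z : X, ∃ Pt : ℕ → A → Measure X,
      (∀ n α, IsProbabilityMeasure (Pt n α)) ∧
      (∀ f : BoundedContinuousFunction X ℝ,
        Tendsto (fun n : ℕ => ⨆ α : A, ENNReal.ofReal |(∫ x, f x ∂Pt n α) - f z|)
          atTop (𝓝 (0 : ℝ≥0∞))) ∧
      Filter.limsup (fun n : ℕ =>
          ⨆ α : A, ((1 / (n : ℝ) : ℝ) : EReal) * relEnt (Pt n α) (P n α)) atTop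
        ≤ (J z : EReal)) :
    ∀ A' : Set X, IsOpen A' →
      -(⨅ z ∈ A', (scEnv J z : EReal))
        ≤ Filter.liminf (fun n : ℕ =>
            ⨅ α : A, ((1 / (n : ℝ) : ℝ) : EReal) * ENNReal.log (P n α A')) atTop :=
  fun _ hA' ↦ lower_bound_from_entropy_general tendsto_natCast_atTop_atTop P hP J hA'
    fun z _ ↦ h z

end
end
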